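/- Let Γ = (Σ ∪ {ε})⁴ \ {(ε,ε,ε,ε)} and let flat : Γ* → Σ* be the map defined by flat((a₁,b₁,c₁,d₁) ⋯ (a_m,b_m,c_m,d_m)) = a₁⋯a_m b₁⋯b_m c₁⋯c_m d₁⋯d_m. Then there exists a regular language K ⊆ Γ* such that flat(K) ⊆ L_Z(ω) and the Zariski closure of φ(L_Z(ω)) in M_d(ℚ̄) equals the Zariski closure of φ(L_BZ(ω) ∪ flat(K)). -/

import Mathlib

noncomputable section

/-- The algebraic closure of `ℚ`. -/
abbrev Qbar : Type := AlgebraicClosure ℚ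

/-- View a rational matrix inside `M_d(ℚ̄)`. -/
def liftMat {d : ℕ} (M : Matrix (Fin d) (Fin d) ℚ) : Matrix (Fin d) (Fin d) Qbar :=
  M.map (algebraMap ℚ Qbar)

/-- The Zariski closure of a set of `d × d` matrices over `ℚ̄`, identified with affine
space `ℚ̄^(d²)`: the common zero set of all polynomials vanishing on the set. -/
def matZClosure (d : ℕ) (S : Set (Matrix (Fin d) (Fin d) Qbar)) :
    Set (Matrix (Fin d) (Fin d) Qbar) :=
  {A | ∀ p : MvPolynomial (Fin d × Fin d) Qbar,
      (∀ B ∈ S, MvPolynomial.eval (fun ij => B ij.1 ij.2) p = 0) →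
      MvPolynomial.eval (fun ij => A ij.1 ij.2) p = 0}

/-- Threshold `η(d) = 2^(d(d+3)) + 1`. -/
def eta (d : ℕ) : ℤ := 2 ^ (d * (d + 3)) + 1

/-- The zero-weight language of `ω`. -/
def zeroLang {α : Type*} (ω : List α → ℤ) : Set (List α) :=
  {w | ω w = 0}

/-- The bounded zero-weight language of `ω`: words of weight zero all of whose
prefixes have weight in `[-η(d), η(d)]`. -/
def boundedZeroLang {α : Type*} (d : ℕ) (ω : List α → ℤ) : Set (List α) :=
  {w | ω w = 0 ∧ ∀ u : List α, u <+: w → -eta d ≤ ω u ∧ ω u ≤ eta d}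

/-- The alphabet `Γ = (Σ ∪ {ε})⁴ \ {(ε,ε,ε,ε)}`, where `ε` is encoded by `none`. -/
def Gam (α : Type*) : Type _ :=
  {g : Option α × Option α × Option α × Option α // g ≠ (none, none, none, none)}

/-- `flat((a₁,b₁,c₁,d₁)⋯(aₘ,bₘ,cₘ,dₘ)) = a₁⋯aₘ b₁⋯bₘ c₁⋯cₘ d₁⋯dₘ` (dropping `ε`'s). -/
def flat {α : Type*} (W : List (Gam α)) : List α :=
  W.filterMap (fun g => g.val.1) ++ W.filterMap (fun g => g.val.2.1) ++
    W.filterMap (fun g => g.val.2.2.1) ++ W.filterMap (fun g => g.val.2.2.2)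

/-
A word of weight zero all of whose prefixes have weight at most `N` in absolute value is read on a
single track. Any other word climbs to weight `±N` and descends again. By the skew Bollobás
inequality, for `N` large depending only on `d`, the climb contains a factor `x` and the descent a
factor `z` whose matrices `X`, `Z` satisfy `X ^ (n + 1) = X * U ^ n` and `Z ^ (n + 1) = Z * V ^ n`
with `U`, `V` invertible. If `a` and `-b` are the weights of `x` and `z`, then repeating `x` and `z`
respectively `b * k + 1` and `a * k + 1` times keeps the weight equal to zero, and for large `k` the
four tracks of `Γ` allow the copies of `x` and `z` to be interleaved with the rest of the word so
that the weight stays in `[-2 * N, 2 * N]`. A polynomial vanishing on the flattenings of such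
bounded words therefore vanishes along the pumped words for all large `k`; its values there form a
linear recurrence sequence in `k : ℤ`, which is identically zero once it is eventually zero, and
`k = 0` gives the original word.
-/

section Recurrent

open Filter

variable {K : Type*} [Field K]

/-- The span of all translates of a two-sided sequence. -/
def translateSpan (f : ℤ → K) : Submodule K (ℤ → K) :=
  Submodule.span K (Set.range fun (k : ℤ) (m : ℤ) => f (m + k))

theorem mem_translateSpan (f : ℤ → K) (k : ℤ) : (fun m => f (m + k)) ∈ translateSpan f :=
  Submodule.subset_span ⟨k, rfl⟩

theorem translateSpan_le {f : ℤ → K} {W : Submodule K (ℤ → K)}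
    (h : ∀ k : ℤ, (fun m => f (m + k)) ∈ W) : translateSpan f ≤ W :=
  Submodule.span_le.2 (Set.range_subset_iff.2 h)

variable (K) in
/-- The algebra of two-sided sequences satisfying a linear recurrence with constant coefficients,
encoded by the condition that the translates span a finite-dimensional space. -/
def recurrentSeq : Subalgebra K (ℤ → K) where
  carrier := {f | (translateSpan f).FG}
  mul_mem' {f g} hf hg := (hf.mul hg).of_le <| translateSpan_le fun k =>
    Submodule.mul_mem_mul (mem_translateSpan f k) (mem_translateSpan g k)
  add_mem' {f g} hf hg := (hf.sup hg).of_le <| translateSpan_le fun k =>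
    Submodule.add_mem_sup (mem_translateSpan f k) (mem_translateSpan g k)
  algebraMap_mem' r := (Submodule.fg_span_singleton (algebraMap K (ℤ → K) r)).of_le <|
    translateSpan_le fun _ => Submodule.mem_span_singleton_self _

theorem translate_mem_translateSpan {f g : ℤ → K} (hg : g ∈ translateSpan f) (k : ℤ) :
    (fun m => g (m + k)) ∈ translateSpan f := by
  have hle : translateSpan f ≤ (translateSpan f).comap (LinearMap.funLeft K K (· + k)) :=
    translateSpan_le fun l => by
      rw [Submodule.mem_comap]
      convert mem_translateSpan f (k + l) using 2 with m
      exact congrArg f (add_assoc m k l)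
  exact hle hg

/-- Translation is injective, hence surjective on the finite-dimensional space of those elements of
`translateSpan f` that vanish from `n₀` on; so this space is stable under shifts to the right. -/
theorem eq_zero_of_eventually_eq_zero {f : ℤ → K} (hf : f ∈ recurrentSeq K)
    (h : ∀ᶠ m in atTop, f m = 0) : f = 0 := by
  obtain ⟨n₀, hn₀⟩ := eventually_atTop.1 h
  let W : Submodule K (ℤ → K) := translateSpan f ⊓ ⨅ m ≥ n₀, LinearMap.ker (LinearMap.proj m)
  have mem_W {g : ℤ → K} : g ∈ W ↔ g ∈ translateSpan f ∧ ∀ m ≥ n₀, g m = 0 := by simp [W]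
  let S : (ℤ → K) ≃ₗ[K] (ℤ → K) := LinearEquiv.funCongrLeft K K (Equiv.addRight 1)
  have : Module.Finite K (translateSpan f) := Module.Finite.iff_fg.2 hf
  have : Module.Finite K W := Submodule.finiteDimensional_of_le inf_le_left
  have hmap : W.map S.toLinearMap = W := by
    refine Submodule.eq_of_le_of_finrank_eq ?_ (S.finrank_map_eq W)
    rintro _ ⟨g, hg, rfl⟩
    have hg := mem_W.1 hg
    exact mem_W.2 ⟨translate_mem_translateSpan hg.1 1, fun m hm => hg.2 (m + 1) (by omega)⟩
  have hshift (g : ℤ → K) (hg : g ∈ W) : (fun m => g (m - 1)) ∈ W := by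
    obtain ⟨g', hg', rfl⟩ := hmap.ge hg
    have : (fun m => S g' (m - 1)) = g' := funext fun m => congrArg g' (sub_add_cancel m 1)
    exact this.symm ▸ hg'
  have hshifts (k : ℕ) : (fun m => f (m - k)) ∈ W := by
    induction k with
    | zero => simpa using mem_W.2 ⟨by simpa using mem_translateSpan f 0, hn₀⟩
    | succ k ih => simpa [sub_sub, add_comm] using hshift _ ih
  ext m
  obtain hm | hm := le_total n₀ m
  · exact hn₀ m hm
  · simpa [Int.toNat_of_nonneg (sub_nonneg.2 hm)] using
      (mem_W.1 (hshifts (n₀ - m).toNat)).2 n₀ le_rfl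

theorem eval_mem_recurrentSeq {σ : Type*} {v : ℤ → σ → K}
    (hv : ∀ s, (fun m => v m s) ∈ recurrentSeq K) (p : MvPolynomial σ K) :
    (fun m => p.eval (v m)) ∈ recurrentSeq K := by
  induction p using MvPolynomial.induction_on with
  | C a =>
    simp only [MvPolynomial.eval_C]
    exact (recurrentSeq K).algebraMap_mem a
  | add p q hp hq =>
    simp only [map_add]
    exact add_mem hp hq
  | mul_X p s hp =>
    simp only [map_mul, MvPolynomial.eval_X]
    exact mul_mem hp (hv s)

variable {n : Type*} [Fintype n]

theorem mul_apply_mem_recurrentSeq {A B : ℤ → Matrix n n K}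
    (hA : ∀ i j, (fun m => A m i j) ∈ recurrentSeq K)
    (hB : ∀ i j, (fun m => B m i j) ∈ recurrentSeq K) (i j : n) :
    (fun m => (A m * B m) i j) ∈ recurrentSeq K := by
  have : (fun m => (A m * B m) i j) = ∑ l, (fun m => A m i l) * fun m => B m l j := by
    ext m
    simp [Matrix.mul_apply]
  rw [this]
  exact sum_mem fun l _ => mul_mem (hA i l) (hB l j)

variable [DecidableEq n]

theorem zpow_apply_mem_recurrentSeq (U : (Matrix n n K)ˣ) (i j : n) :
    (fun m : ℤ => ((U ^ m : (Matrix n n K)ˣ) : Matrix n n K) i j) ∈ recurrentSeq K := by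
  let entry (ij : n × n) (m : ℤ) : K := ((U ^ m : (Matrix n n K)ˣ) : Matrix n n K) ij.1 ij.2
  refine (Submodule.fg_span (Set.finite_range entry)).of_le (translateSpan_le fun k => ?_)
  have : (fun m => entry (i, j) (m + k)) = ∑ l, entry (l, j) k • entry (i, l) := by
    ext m
    simp only [entry, zpow_add, Units.val_mul, Matrix.mul_apply, Finset.sum_apply, Pi.smul_apply,
      smul_eq_mul, mul_comm]
  change (fun m => entry (i, j) (m + k)) ∈ _
  rw [this]
  exact sum_mem fun l _ => Submodule.smul_mem _ _ (Submodule.subset_span ⟨(i, l), rfl⟩)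

theorem eval_eq_zero_of_eventually_pow (U V : (Matrix n n K)ˣ) (A B C : Matrix n n K)
    (p : MvPolynomial (n × n) K)
    (h : ∀ᶠ m : ℕ in atTop, p.eval (fun ij =>
      (A * (U : Matrix n n K) ^ m * B * (V : Matrix n n K) ^ m * C) ij.1 ij.2) = 0) :
    p.eval (fun ij => (A * B * C) ij.1 ij.2) = 0 := by
  let F (m : ℤ) : Matrix n n K := A * (U ^ m : (Matrix n n K)ˣ) * B * (V ^ m : (Matrix n n K)ˣ) * C
  have hconst (M : Matrix n n K) (i j : n) : (fun _ : ℤ => M i j) ∈ recurrentSeq K :=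
    (recurrentSeq K).algebraMap_mem (M i j)
  have hF (ij : n × n) : (fun m => F m ij.1 ij.2) ∈ recurrentSeq K := by
    refine mul_apply_mem_recurrentSeq (fun i j => ?_) (hconst C) _ _
    refine mul_apply_mem_recurrentSeq (fun i j => ?_) (zpow_apply_mem_recurrentSeq V) i j
    refine mul_apply_mem_recurrentSeq (fun i j => ?_) (hconst B) i j
    exact mul_apply_mem_recurrentSeq (hconst A) (zpow_apply_mem_recurrentSeq U) i j
  have hzero : (fun m => p.eval fun ij => F m ij.1 ij.2) = 0 := by
    have hmem := eval_mem_recurrentSeq (v := fun m (ij : n × n) => F m ij.1 ij.2) hF p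
    refine eq_zero_of_eventually_eq_zero hmem ?_
    obtain ⟨m₀, hm₀⟩ := eventually_atTop.1 h
    filter_upwards [eventually_ge_atTop (m₀ : ℤ)] with m hm
    lift m to ℕ using (Int.natCast_nonneg m₀).trans hm
    have hm : m₀ ≤ m := by exact_mod_cast hm
    simpa only [F, zpow_natCast, Units.val_pow_eq_pow_val] using hm₀ m hm
  simpa only [F, zpow_zero, Units.val_one, mul_one, Pi.zero_apply] using congrFun hzero 0

end Recurrent

section Pumpable

/-- An element `a` all of whose positive powers have the form `a * u ^ n` for one fixed unit `u`. -/
def IsPumpable {M : Type*} [Monoid M] (a : M) : Prop :=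
  ∃ u : Mˣ, a * a = a * u

theorem IsPumpable.exists_pow_succ_eq {M : Type*} [Monoid M] {a : M} (h : IsPumpable a) :
    ∃ u : Mˣ, ∀ n : ℕ, a ^ (n + 1) = a * (u : M) ^ n := by
  obtain ⟨u, hu⟩ := h
  refine ⟨u, fun n => ?_⟩
  induction n with
  | zero => simp
  | succ n ih => rw [pow_succ', ih, ← mul_assoc, hu, mul_assoc, ← pow_succ']

theorem IsPumpable.of_mulEquiv {M N : Type*} [Monoid M] [Monoid N] (e : M ≃* N) {a : M}
    (h : IsPumpable (e a)) : IsPumpable a := by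
  obtain ⟨u, hu⟩ := h
  exact ⟨Units.mapEquiv e.symm u, e.injective (by simp [hu])⟩

variable {K V : Type*} [Field K] [AddCommGroup V] [Module K V] [FiniteDimensional K V]

theorem isPumpable_of_disjoint_range_ker {f : Module.End K V} (hf : Disjoint f.range f.ker) :
    IsPumpable f := by
  have hcompl : IsCompl f.ker f.range := by
    rw [Submodule.isCompl_iff_disjoint _ _ (by rw [add_comm, f.finrank_range_add_finrank_ker])]
    exact hf.symm
  let π : Module.End K V := Submodule.projection _ _ hcompl
  have hπ (x : V) : π x ∈ f.ker := Submodule.projection_apply_mem _ x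
  have hunit : IsUnit (f + π) := by
    refine (LinearMap.isUnit_iff_ker_eq_bot _).2 ((Submodule.eq_bot_iff _).2 fun x hx => ?_)
    have hsum : f x + π x = 0 := hx
    have hfx : f x = 0 := Submodule.disjoint_def.1 hf _ ⟨x, rfl⟩
      (eq_neg_of_add_eq_zero_left hsum ▸ neg_mem (hπ x))
    have hπx : π x = x := Submodule.projection_apply_of_mem_left hcompl hfx
    rwa [hfx, zero_add, hπx] at hsum
  refine ⟨hunit.unit, LinearMap.ext fun x => ?_⟩
  have : f (π x) = 0 := hπ x
  simp [this]

/-- The form is the determinant of the classes of its arguments in the `k`-dimensional quotient. -/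
theorem exists_multilinearMap_ne_zero_iff_disjoint {k : ℕ} {Y : Submodule K V}
    (hY : Module.finrank K (V ⧸ Y) = k) :
    ∃ g : MultilinearMap K (fun _ : Fin k => V) K, ∀ c : Fin k → V, LinearIndependent K c →
      (g c ≠ 0 ↔ Disjoint (Submodule.span K (Set.range c)) Y) := by
  let D : V →ₗ[K] Fin k → K := (Module.finBasisOfFinrankEq K _ hY).equivFun.toLinearMap ∘ₗ Y.mkQ
  have hD : D.ker = Y := by rw [LinearMap.ker_comp, LinearEquiv.ker, Submodule.comap_bot, Y.ker_mkQ]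
  refine ⟨(Matrix.detRowAlternating.compLinearMap D).toMultilinearMap, fun c hc => ?_⟩
  change Matrix.det (Matrix.of fun l => D (c l)) ≠ 0 ↔ _
  rw [← isUnit_iff_ne_zero, ← Matrix.isUnit_iff_isUnit_det,
    ← Matrix.linearIndependent_rows_iff_isUnit, ← hD]
  exact ⟨fun h => Submodule.range_ker_disjoint h,
    fun h => (D.linearIndependent_iff_of_disjoint h).2 hc⟩

theorem linearIndependent_of_triangular {W ι : Type*} [AddCommGroup W] [Module K W]
    [LinearOrder ι] [WellFoundedLT ι] {g : ι → W} (ℓ : ι → Module.Dual K W)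
    (hdiag : ∀ i, ℓ i (g i) ≠ 0) (hlt : ∀ i j, i < j → ℓ i (g j) = 0) :
    LinearIndependent K g := by
  refine linearIndependent_iff''.2 fun s a ha hsum i => ?_
  induction i using WellFoundedLT.induction with
  | ind i ih =>
    have hev : ∑ j ∈ s, a j * ℓ i (g j) = 0 := by simpa using congrArg (ℓ i) hsum
    rw [Finset.sum_eq_single i] at hev
    · exact (mul_eq_zero.1 hev).resolve_right (hdiag i)
    · intro j _ hji
      obtain hji | hij := hji.lt_or_gt
      · rw [ih j hji, zero_mul]
      · rw [hlt i j hij, mul_zero]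
    · intro hi
      rw [ha i hi, zero_mul]

theorem exists_linearIndependent_span_eq {k : ℕ} {X : Submodule K V}
    (hX : Module.finrank K X = k) :
    ∃ c : Fin k → V, LinearIndependent K c ∧ Submodule.span K (Set.range c) = X := by
  let b := Module.finBasisOfFinrankEq K X hX
  refine ⟨X.subtype ∘ b, b.linearIndependent.map' _ X.ker_subtype, ?_⟩
  rw [Set.range_comp, ← Submodule.map_span, b.span_eq, Submodule.map_subtype_top]

/-- Skew Bollobás inequality for subspaces: the forms attached to the `Y i` are triangular with
respect to evaluation at bases of the `X i`. -/
theorem card_le_finrank_of_skew {ι : Type*} [Fintype ι] [LinearOrder ι] {k : ℕ}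
    {X Y : ι → Submodule K V} (hX : ∀ i, Module.finrank K (X i) = k)
    (hY : ∀ i, Module.finrank K (V ⧸ Y i) = k) (hdiag : ∀ i, Disjoint (X i) (Y i))
    (hlt : ∀ i j, i < j → ¬Disjoint (X i) (Y j)) :
    Fintype.card ι ≤ Module.finrank K (MultilinearMap K (fun _ : Fin k => V) K) := by
  choose g hg using fun i => exists_multilinearMap_ne_zero_iff_disjoint (hY i)
  choose c hc hspan using fun i => exists_linearIndependent_span_eq (hX i)
  have hgc (i j : ι) : g j (c i) ≠ 0 ↔ Disjoint (X i) (Y j) := by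
    rw [hg j (c i) (hc i), hspan i]
  let ev (i : ι) : Module.Dual K (MultilinearMap K (fun _ : Fin k => V) K) :=
    { toFun := fun m => m (c i), map_add' := fun _ _ => rfl, map_smul' := fun _ _ => rfl }
  have hli : LinearIndependent K g := linearIndependent_of_triangular ev
    (fun i => (hgc i i).2 (hdiag i)) fun i j hij => not_not.1 (mt (hgc i j).1 (hlt i j hij))
  exact hli.fintype_card_le_finrank

/-- `P i j` behaves as the product of the factors with indices in `[i, j)` of a sequence. -/
def IsFactorSystem {M : Type*} [Mul M] (P : ℕ → ℕ → M) : Prop :=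
  ∀ ⦃i j k⦄, i ≤ j → j ≤ k → P i j * P j k = P i k

theorem disjoint_range_ker_of_finrank_mul_eq {f g : Module.End K V}
    (h : Module.finrank K (f * g).range = Module.finrank K g.range) : Disjoint g.range f.ker := by
  have hker : g.ker = (f * g).ker := by
    refine Submodule.eq_of_le_of_finrank_eq (LinearMap.ker_le_ker_comp g f) ?_
    have := g.finrank_range_add_finrank_ker
    have := (f * g).finrank_range_add_finrank_ker
    omega
  refine Submodule.disjoint_def.2 ?_
  rintro _ ⟨y, rfl⟩ hy
  exact hker.ge hy

theorem IsFactorSystem.exists_disjoint_of_finrank_eq {P : ℕ → ℕ → Module.End K V}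
    (hP : IsFactorSystem P) {k n : ℕ}
    (hrank : ∀ i j, i < j → j ≤ n → Module.finrank K (P i j).range = k)
    (hn : Module.finrank K (MultilinearMap K (fun _ : Fin k => V) K) + 1 < n) :
    ∃ i j, i < j ∧ j ≤ n ∧ Disjoint (P i j).range (P i j).ker := by
  by_contra! hcon
  have hrange (i m j : ℕ) (him : i < m) (hmj : m ≤ j) (hj : j ≤ n) :
      (P i j).range = (P i m).range := by
    refine Submodule.eq_of_le_of_finrank_eq ?_ ?_
    · exact hP him.le hmj ▸ LinearMap.range_comp_le_range _ _
    · rw [hrank i j (by omega) hj, hrank i m him (by omega)]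
  have hcorank (i j : ℕ) (hij : i < j) (hj : j ≤ n) : Module.finrank K (V ⧸ (P i j).ker) = k :=
    (P i j).quotKerEquivRange.finrank_eq.trans (hrank i j hij hj)
  have hker (i m j : ℕ) (him : i ≤ m) (hmj : m < j) (hj : j ≤ n) :
      (P m j).ker = (P i j).ker := by
    refine Submodule.eq_of_le_of_finrank_eq ?_ ?_
    · exact hP him hmj.le ▸ LinearMap.ker_le_ker_comp _ _
    · have := (P m j).ker.finrank_quotient_add_finrank
      have := (P i j).ker.finrank_quotient_add_finrank
      have := hcorank m j hmj hj
      have := hcorank i j (by omega) hj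
      omega
  have hcard := card_le_finrank_of_skew (ι := Fin (n - 1))
    (X := fun i => (P (i + 1) (i + 2)).range) (Y := fun i => (P i (i + 1)).ker)
    (fun i => hrank _ _ (by omega) (by omega)) (fun i => hcorank _ _ (by omega) (by omega))
    (fun i => ?_) fun i j hij => ?_
  · rw [Fintype.card_fin] at hcard
    omega
  · refine disjoint_range_ker_of_finrank_mul_eq ?_
    rw [hP (by omega) (by omega), hrank _ _ (by omega) (by omega), hrank _ _ (by omega) (by omega)]
  · rw [← hrange (i + 1) (i + 2) (j + 1) (by omega) (by omega) (by omega),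
      hker (i + 1) j (j + 1) (by omega) (by omega) (by omega)]
    exact hcon _ _ (by omega) (by omega)

theorem IsFactorSystem.finrank_range_le {P : ℕ → ℕ → Module.End K V} (hP : IsFactorSystem P)
    {i a b j : ℕ} (hia : i ≤ a) (hab : a ≤ b) (hbj : b ≤ j) :
    Module.finrank K (P i j).range ≤ Module.finrank K (P a b).range := by
  rw [← hP hia (hab.trans hbj), ← hP hab hbj, Module.End.mul_eq_comp, LinearMap.range_comp]
  exact (Submodule.finrank_map_le _ _).trans
    (Submodule.finrank_mono (LinearMap.range_comp_le_range _ _))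

variable (K V) in
/-- Cut a product without disjoint factor into blocks, each of rank at most `finrank K V - r`. If
the rank of the whole product is not smaller, then all products of consecutive blocks have the same
rank. -/
theorem exists_disjoint_factor_or_finrank_add_le (r : ℕ) :
    ∃ N > 0, ∀ P : ℕ → ℕ → Module.End K V, IsFactorSystem P →
      (∃ i j, i < j ∧ j ≤ N ∧ Disjoint (P i j).range (P i j).ker) ∨
      Module.finrank K (P 0 N).range + r ≤ Module.finrank K V := by
  induction r with
  | zero => exact ⟨1, one_pos, fun P _ => Or.inr (Submodule.finrank_le _)⟩
  | succ r ih =>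
    obtain ⟨N, hN, ih⟩ := ih
    let k := Module.finrank K V - r
    let n := Module.finrank K (MultilinearMap K (fun _ : Fin k => V) K) + 2
    refine ⟨n * N, by positivity, fun P hP => or_iff_not_imp_left.2 fun hdisj => ?_⟩
    have hmul {i j : ℕ} (hij : i ≤ j) : i * N ≤ j * N := Nat.mul_le_mul_right N hij
    have hblock (i : ℕ) (hi : i < n) :
        Module.finrank K (P (i * N) ((i + 1) * N)).range + r ≤ Module.finrank K V := by
      have hle : (i + 1) * N ≤ n * N := hmul hi
      rw [Nat.succ_mul] at hle ⊢
      refine (ih (fun a b => P (i * N + a) (i * N + b)) fun a b c hab hbc =>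
        hP (by omega) (by omega)).resolve_left ?_
      rintro ⟨a, b, hab, hb, h⟩
      exact hdisj ⟨_, _, by omega, by omega, h⟩
    by_contra! hlt
    have hrank (i j : ℕ) (hij : i < j) (hj : j ≤ n) :
        Module.finrank K (P (i * N) (j * N)).range = k := by
      have hupper := hP.finrank_range_le le_rfl (hmul (Nat.le_add_right i 1)) (hmul hij)
      have hlower := hP.finrank_range_le (Nat.zero_le _) (hmul hij.le) (hmul hj)
      have := hblock i (hij.trans_le hj)
      dsimp only [k]
      omega
    have hblocks : IsFactorSystem fun i j => P (i * N) (j * N) :=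
      fun i j l hij hjl => hP (hmul hij) (hmul hjl)
    obtain ⟨i, j, hij, hj, h⟩ := hblocks.exists_disjoint_of_finrank_eq hrank (Nat.lt_succ_self _)
    exact hdisj ⟨_, _, Nat.mul_lt_mul_of_pos_right hij hN, hmul hj, h⟩

variable (K V) in
theorem exists_isPumpable_factor_end : ∃ N, ∀ P : ℕ → ℕ → Module.End K V, IsFactorSystem P →
    ∃ i j, i < j ∧ j ≤ N ∧ IsPumpable (P i j) := by
  obtain ⟨N, -, hN⟩ := exists_disjoint_factor_or_finrank_add_le K V (Module.finrank K V + 1)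
  refine ⟨N, fun P hP => ?_⟩
  obtain ⟨i, j, hij, hj, h⟩ := (hN P hP).resolve_right (by omega)
  exact ⟨i, j, hij, hj, isPumpable_of_disjoint_range_ker h⟩

theorem isFactorSystem_prod_take_drop {M : Type*} [Monoid M] (l : List M) :
    IsFactorSystem fun i j => ((l.drop i).take (j - i)).prod := by
  intro i j k hij hjk
  obtain ⟨a, rfl⟩ := Nat.exists_eq_add_of_le hij
  obtain ⟨b, rfl⟩ := Nat.exists_eq_add_of_le hjk
  dsimp only
  rw [Nat.add_sub_cancel_left, Nat.add_sub_cancel_left, Nat.add_assoc, Nat.add_sub_cancel_left,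
    ← List.drop_drop, ← List.prod_append, ← List.take_add]

theorem exists_isPumpable_infix (K n : Type*) [Field K] [Fintype n] [DecidableEq n] :
    ∃ N, ∀ l : List (Matrix n n K), N ≤ l.length →
      ∃ l₁ l₂ l₃, l = l₁ ++ l₂ ++ l₃ ∧ l₂ ≠ [] ∧ IsPumpable l₂.prod := by
  obtain ⟨N, hN⟩ := exists_isPumpable_factor_end K (n → K)
  refine ⟨N, fun l hl => ?_⟩
  let e := (Matrix.toLinAlgEquiv' (R := K) (n := n)).toMulEquiv
  have hfactor := isFactorSystem_prod_take_drop l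
  obtain ⟨i, j, hij, hj, h⟩ := hN (fun i j => e ((l.drop i).take (j - i)).prod)
    fun i j k hij hjk => (map_mul e _ _).symm.trans (congrArg e (hfactor hij hjk))
  refine ⟨l.take i, (l.drop i).take (j - i), l.drop j, ?_, ?_, h.of_mulEquiv e⟩
  · rw [← Nat.add_sub_cancel' hij.le, ← List.drop_drop, Nat.add_sub_cancel_left, List.append_assoc,
      List.take_append_drop, List.take_append_drop]
  · refine List.ne_nil_of_length_pos ?_
    rw [List.length_take, List.length_drop]
    omega

end Pumpable

section Words

variable {α : Type*} {c : α → ℤ}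

theorem prefix_append_iff {u v w : List α} :
    u <+: v ++ w ↔ u <+: v ∨ ∃ w', w' <+: w ∧ u = v ++ w' := by
  constructor
  · intro h
    obtain hle | hle := le_total u.length v.length
    · exact Or.inl (List.prefix_of_prefix_length_le h (List.prefix_append v w) hle)
    · obtain ⟨w', rfl⟩ := List.prefix_of_prefix_length_le (List.prefix_append v w) h hle
      exact Or.inr ⟨w', (List.prefix_append_right_inj v).1 h, rfl⟩
  · rintro (h | ⟨w', h, rfl⟩)
    · exact h.trans (List.prefix_append v w)
    · exact (List.prefix_append_right_inj v).2 h

/-- Every prefix of the word has weight at most `B` in absolute value. -/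
def PrefixBounded (c : α → ℤ) (B : ℤ) (w : List α) : Prop :=
  ∀ v, v <+: w → |(v.map c).sum| ≤ B

theorem prefixBounded_append_iff {B : ℤ} {u w : List α} :
    PrefixBounded c B (u ++ w) ↔
      PrefixBounded c B u ∧ ∀ v, v <+: w → |(u.map c).sum + (v.map c).sum| ≤ B := by
  simp only [PrefixBounded, prefix_append_iff, or_imp, forall_and, forall_exists_index, and_imp]
  refine and_congr_right' ⟨fun h v hv => ?_, ?_⟩
  · simpa using h _ v hv rfl
  · rintro h _ v hv rfl
    simpa using h v hv

theorem prefixBounded_map_iff {β : Type*} {B : ℤ} {f : β → α} {w : List β} :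
    PrefixBounded c B (w.map f) ↔ PrefixBounded (c ∘ f) B w := by
  simp only [PrefixBounded, List.prefix_map_iff]
  refine ⟨fun h v hv => ?_, ?_⟩
  · simpa using h (v.map f) ⟨v, hv, rfl⟩
  · rintro h _ ⟨v, hv, rfl⟩
    simpa using h v hv

theorem prefixBounded_singleton {B : ℤ} {σ : α} (hσ : |c σ| ≤ B) : PrefixBounded c B [σ] := by
  intro v hv
  obtain rfl | hv := List.prefix_concat_iff (l₂ := []).1 hv
  · simpa using hσ
  · simpa [List.prefix_nil.1 hv] using (abs_nonneg _).trans hσ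

theorem sum_map_neg_weight (w : List α) : (w.map (-c)).sum = -(w.map c).sum := by
  induction w with
  | nil => simp
  | cons σ w ih => simp [ih, add_comm]

theorem prefixBounded_neg_iff {B : ℤ} {w : List α} :
    PrefixBounded (-c) B w ↔ PrefixBounded c B w := by
  simp only [PrefixBounded, sum_map_neg_weight, abs_neg]

theorem forall_prefix_lt_or_exists_first_passage {f : List α → ℤ} {N : ℤ} (hnil : f [] ≤ N)
    (hstep : ∀ v σ, f (v ++ [σ]) ≤ f v + 1) (w : List α) :
    (∀ v, v <+: w → f v < N) ∨ ∃ u, u <+: w ∧ f u = N ∧ ∀ v, v <+: u → f v ≤ N := by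
  induction w using List.reverseRecOn with
  | nil =>
    simp only [List.prefix_nil, forall_eq, exists_eq_left]
    exact hnil.lt_or_eq.imp_right fun h => ⟨h, h.le⟩
  | append_singleton w σ ih =>
    obtain hlt | ⟨u, huw, hu⟩ := ih
    · have hle : f (w ++ [σ]) ≤ N := (hstep w σ).trans (hlt w List.prefix_rfl)
      simp only [List.prefix_concat_iff]
      obtain h | h := hle.lt_or_eq
      · exact Or.inl fun v hv => hv.elim (fun hv => hv ▸ h) (hlt v)
      · refine Or.inr ⟨_, Or.inl rfl, h, fun v hv => ?_⟩
        exact (List.prefix_concat_iff.1 hv).elim (fun hv => hv ▸ h.le) fun hv => (hlt v hv).le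
    · exact Or.inr ⟨u, huw.trans (List.prefix_append w [σ]), hu⟩

/-- Cut `w` where its weight is equal to `n` for the last time. -/
theorem exists_last_passage (hc : ∀ σ, c σ ≤ 1) {n : ℤ} (hn : 0 ≤ n) {w : List α}
    (hw : n < (w.map c).sum) :
    ∃ u y, w = u ++ y ∧ (u.map c).sum = n ∧ ∀ v, v <+: y → 0 ≤ (v.map c).sum := by
  induction w using List.reverseRecOn with
  | nil => exact absurd hw (by simpa using hn)
  | append_singleton w σ ih =>
    simp only [List.map_append, List.map_singleton, List.sum_append, List.sum_singleton] at hw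
    obtain hlt | hle := lt_or_ge n (w.map c).sum
    · obtain ⟨u, y, rfl, hu, hy⟩ := ih hlt
      refine ⟨u, y ++ [σ], List.append_assoc .., hu, fun v hv => ?_⟩
      obtain rfl | hv := List.prefix_concat_iff.1 hv
      · simp only [List.map_append, List.map_singleton, List.sum_append, List.sum_singleton] at hw ⊢
        omega
      · exact hy v hv
    · have := hc σ
      refine ⟨w, [σ], rfl, by omega, fun v hv => ?_⟩
      obtain rfl | hv := List.prefix_concat_iff (l₂ := []).1 hv
      · simp only [List.nil_append, List.map_singleton, List.sum_singleton]
        omega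
      · simp [List.prefix_nil.1 hv]

theorem exists_ladder (hc : ∀ σ, c σ ≤ 1) {N : ℕ} {w : List α} (hw : (w.map c).sum = N) :
    ∃ (u : List α) (Y : List (List α)), w = u ++ Y.flatten ∧ (u.map c).sum = 0 ∧ Y.length = N ∧
      ∀ y ∈ Y, (y.map c).sum = 1 ∧ ∀ v, v <+: y → 0 ≤ (v.map c).sum := by
  induction N generalizing w with
  | zero => exact ⟨w, [], by simpa using hw⟩
  | succ N ih =>
    obtain ⟨w, y, rfl, hwN, hy⟩ := exists_last_passage (n := N) (w := w) hc (by omega) (by omega)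
    obtain ⟨u, Y, rfl, hu, hlen, hY⟩ := ih hwN
    refine ⟨u, Y ++ [y], by simp, hu, by simp [hlen], fun z hz => ?_⟩
    obtain hz | hz := List.mem_append.1 hz
    · exact hY z hz
    · obtain rfl := List.mem_singleton.1 hz
      rw [List.map_append, List.sum_append, hwN] at hw
      exact ⟨by omega, hy⟩

theorem sum_map_nonneg_of_prefix_flatten {Y : List (List α)}
    (hY : ∀ y ∈ Y, ∀ v, v <+: y → 0 ≤ (v.map c).sum) {v : List α} (hv : v <+: Y.flatten) :
    0 ≤ (v.map c).sum := by
  induction Y generalizing v with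
  | nil => simp [List.prefix_nil.1 hv]
  | cons y Y ih =>
    rw [List.forall_mem_cons] at hY
    obtain hv | ⟨v, hv', rfl⟩ := prefix_append_iff.1 hv
    · exact hY.1 v hv
    · rw [List.map_append, List.sum_append]
      exact add_nonneg (hY.1 y List.prefix_rfl) (ih hY.2 hv')

theorem sum_map_flatten_eq_length {Y : List (List α)} (hY : ∀ y ∈ Y, (y.map c).sum = 1) :
    (Y.flatten.map c).sum = Y.length := by
  induction Y with
  | nil => simp
  | cons y Y ih =>
    rw [List.forall_mem_cons] at hY
    rw [List.flatten_cons, List.map_append, List.sum_append, hY.1, ih hY.2, List.length_cons]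
    omega

theorem exists_pumpable_subword {M : Type*} [Monoid M] {N : ℕ}
    (hN : ∀ l : List M, N ≤ l.length →
      ∃ l₁ l₂ l₃, l = l₁ ++ l₂ ++ l₃ ∧ l₂ ≠ [] ∧ IsPumpable l₂.prod)
    (Φ : α → M) (hc : ∀ σ, c σ ≤ 1) {w : List α} (hw : N ≤ (w.map c).sum) :
    ∃ a x b, w = a ++ x ++ b ∧ 0 < (x.map c).sum ∧ PrefixBounded c N x ∧
      IsPumpable (x.map Φ).prod := by
  obtain hlt | ⟨_, ⟨t, rfl⟩, huN, hmax⟩ := forall_prefix_lt_or_exists_first_passage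
    (f := fun v => (v.map c).sum) (N := N) (by simp) (fun v σ => by simpa using hc σ) w
  · exact absurd (hlt w List.prefix_rfl) hw.not_gt
  obtain ⟨a, Y, rfl, ha, hlen, hY⟩ := exists_ladder hc huN
  obtain ⟨_, _, l₃, heq, hne, hpump⟩ := hN (Y.map fun y => (y.map Φ).prod) (by simp [hlen])
  obtain ⟨_, Y₃, rfl, h₁₂, -⟩ := List.map_eq_append_iff.1 heq
  obtain ⟨Y₁, Y₂, rfl, -, rfl⟩ := List.map_eq_append_iff.1 h₁₂
  simp only [List.forall_mem_append] at hY
  obtain ⟨⟨hY₁, hY₂⟩, -⟩ := hY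
  refine ⟨a ++ Y₁.flatten, Y₂.flatten, Y₃.flatten ++ t, by simp, ?_, fun v hv => ?_, ?_⟩
  · rw [sum_map_flatten_eq_length fun y hy => (hY₂ y hy).1]
    exact_mod_cast List.length_pos_of_ne_nil (mt (by rintro rfl; rfl) hne)
  · have hv₀ := sum_map_nonneg_of_prefix_flatten (fun y hy => (hY₂ y hy).2) hv
    have hvN := hmax (a ++ Y₁.flatten ++ v) (by
      simpa using hv.trans (List.prefix_append _ _))
    have := sum_map_flatten_eq_length fun y hy => (hY₁ y hy).1
    rw [List.map_append, List.map_append, List.sum_append, List.sum_append, ha, this] at hvN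
    exact abs_le.2 ⟨by omega, by omega⟩
  · rwa [List.map_flatten, List.prod_flatten, List.map_map]

end Words

section WordPow

variable {α : Type*}

/-- The `n`-th power `x ⋯ x` of a word `x`. -/
def wordPow (x : List α) (n : ℕ) : List α :=
  (List.replicate n x).flatten

theorem wordPow_zero (x : List α) : wordPow x 0 = [] := rfl

theorem wordPow_succ (x : List α) (n : ℕ) : wordPow x (n + 1) = wordPow x n ++ x := by
  simp [wordPow, List.replicate_succ']

theorem prod_map_wordPow {M : Type*} [Monoid M] (Φ : α → M) (x : List α) (n : ℕ) :
    ((wordPow x n).map Φ).prod = (x.map Φ).prod ^ n := by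
  simp [wordPow, List.map_flatten, List.prod_flatten]

theorem sum_map_wordPow (c : α → ℤ) (x : List α) (n : ℕ) :
    ((wordPow x n).map c).sum = n * (x.map c).sum := by
  simp [wordPow, List.map_flatten, List.sum_flatten]

theorem filterMap_wordPow {β : Type*} (f : α → Option β) (x : List α) (n : ℕ) :
    (wordPow x n).filterMap f = wordPow (x.filterMap f) n := by
  simp [wordPow, List.filterMap_flatten]

theorem map_wordPow {β : Type*} (f : α → β) (x : List α) (n : ℕ) :
    (wordPow x n).map f = wordPow (x.map f) n := by
  simp [wordPow, List.map_flatten]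

end WordPow

section BoundedLanguage

variable {β : Type*}

/-- The language of words of weight zero all of whose prefixes have weight in `[-B, B]`. -/
def balancedLang (c : β → ℤ) (B : ℤ) : Language β :=
  {W | (W.map c).sum = 0 ∧ PrefixBounded c B W}

theorem balancedLang_isRegular (c : β → ℤ) (B : ℤ) : (balancedLang c B).IsRegular := by
  let quotient (s : ℤ) : Language β :=
    {V | s + (V.map c).sum = 0 ∧ ∀ v, v <+: V → |s + (v.map c).sum| ≤ B}
  refine Language.isRegular_iff_finite_range_leftQuotient.2 <|
    (((Set.finite_Icc (-B) B).image quotient).insert ⊥).subset ?_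
  rintro _ ⟨U, rfl⟩
  have hmem (V : List β) : V ∈ (balancedLang c B).leftQuotient U ↔
      PrefixBounded c B U ∧ V ∈ quotient (U.map c).sum := by
    change _ ∧ PrefixBounded c B (U ++ V) ↔ _ ∧ _ ∧ _
    rw [prefixBounded_append_iff, List.map_append, List.sum_append]
    tauto
  by_cases hU : PrefixBounded c B U
  · refine Or.inr ⟨_, abs_le.1 (hU U List.prefix_rfl), Set.ext fun V => ?_⟩
    exact (and_iff_right hU).symm.trans (hmem V).symm
  · exact Or.inl (Set.ext fun V => iff_of_false (fun h => hU ((hmem V).1 h).1) id)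

theorem balancedLang_neg (c : β → ℤ) (B : ℤ) : balancedLang (-c) B = balancedLang c B := by
  ext W
  change _ ∧ _ ↔ _ ∧ _
  rw [sum_map_neg_weight, neg_eq_zero, prefixBounded_neg_iff]

end BoundedLanguage

section Tracks

variable {α : Type*}

/-- The `i`-th component of a letter of `Γ`; `flat` reads the four components one after another. -/
def track (i : Fin 4) (g : Gam α) : Option α :=
  ![g.val.1, g.val.2.1, g.val.2.2.1, g.val.2.2.2] i

/-- The letter of `Γ` whose only nonempty component is the `i`-th one. -/
def trackLetter (i : Fin 4) (a : α) : Gam α :=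
  ![⟨(some a, none, none, none), by simp⟩, ⟨(none, some a, none, none), by simp⟩,
    ⟨(none, none, some a, none), by simp⟩, ⟨(none, none, none, some a), by simp⟩] i

theorem track_trackLetter_self (i : Fin 4) (a : α) : track i (trackLetter i a) = some a := by
  fin_cases i <;> rfl

theorem track_trackLetter_of_ne {i j : Fin 4} (hij : i ≠ j) (a : α) :
    track i (trackLetter j a) = none := by
  fin_cases i <;> fin_cases j <;> first | rfl | exact absurd rfl hij

theorem filterMap_track_map_self (i : Fin 4) (w : List α) :
    (w.map (trackLetter i)).filterMap (track i) = w := by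
  simp [List.filterMap_map, track_trackLetter_self]

theorem filterMap_track_map_of_ne {i j : Fin 4} (hij : i ≠ j) (w : List α) :
    (w.map (trackLetter j)).filterMap (track i) = [] := by
  simp [List.filterMap_map, track_trackLetter_of_ne hij]

theorem flat_eq_append_track (W : List (Gam α)) :
    flat W = W.filterMap (track 0) ++ W.filterMap (track 1) ++ W.filterMap (track 2) ++
      W.filterMap (track 3) :=
  rfl

theorem flat_map_trackLetter (i : Fin 4) (w : List α) : flat (w.map (trackLetter i)) = w := by
  fin_cases i <;>
    simp [flat_eq_append_track, filterMap_track_map_self, filterMap_track_map_of_ne,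
      -List.filterMap_map]

/-- The weight that a letter of `Γ` contributes to the flattening. -/
def flatWeight (c : α → ℤ) (g : Gam α) : ℤ :=
  ∑ i, (track i g).elim 0 c

theorem flatWeight_comp_trackLetter (c : α → ℤ) (i : Fin 4) : flatWeight c ∘ trackLetter i = c := by
  ext a
  fin_cases i <;> simp [flatWeight, Fin.sum_univ_four, track, trackLetter]

theorem flatWeight_neg (c : α → ℤ) : flatWeight (-c) = -flatWeight c := by
  ext g
  rw [Pi.neg_apply, flatWeight, flatWeight, ← Finset.sum_neg_distrib]
  exact Finset.sum_congr rfl fun i _ => by cases track i g <;> simp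

theorem sum_map_flat (c : α → ℤ) (W : List (Gam α)) :
    ((flat W).map c).sum = (W.map (flatWeight c)).sum := by
  have hcons (i : Fin 4) (g : Gam α) (W : List (Gam α)) :
      (((g :: W).filterMap (track i)).map c).sum =
        (track i g).elim 0 c + ((W.filterMap (track i)).map c).sum := by
    cases h : track i g <;> simp [h]
  have hflat (W : List (Gam α)) :
      ((flat W).map c).sum = ∑ i, ((W.filterMap (track i)).map c).sum := by
    simp [flat_eq_append_track, Fin.sum_univ_four, add_assoc]
  rw [hflat]
  induction W with
  | nil => simp
  | cons g W ih => rw [List.map_cons, List.sum_cons, ← ih, flatWeight, ← Finset.sum_add_distrib,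
      Finset.sum_congr rfl fun i _ => hcons i g W]

/-- Trace equivalence: `V` and `W` have the same `i`-th component for each `i`. -/
def SameTracks (V W : List (Gam α)) : Prop :=
  ∀ i, V.filterMap (track i) = W.filterMap (track i)

theorem SameTracks.symm {V W : List (Gam α)} (h : SameTracks V W) : SameTracks W V :=
  fun i => (h i).symm

theorem SameTracks.trans {U V W : List (Gam α)} (h : SameTracks U V) (h' : SameTracks V W) :
    SameTracks U W :=
  fun i => (h i).trans (h' i)

theorem SameTracks.append_right {V W : List (Gam α)} (h : SameTracks V W) (U : List (Gam α)) :
    SameTracks (V ++ U) (W ++ U) :=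
  fun i => by rw [List.filterMap_append, List.filterMap_append, h i]

theorem SameTracks.flat_eq {V W : List (Gam α)} (h : SameTracks V W) : flat V = flat W := by
  simp only [flat_eq_append_track, h _]

theorem SameTracks.weight_eq {V W : List (Gam α)} (h : SameTracks V W) (c : α → ℤ) :
    (V.map (flatWeight c)).sum = (W.map (flatWeight c)).sum := by
  rw [← sum_map_flat, ← sum_map_flat, h.flat_eq]

/-- `V` and `W` have no nonempty component in common, so they commute up to trace equivalence. -/
def TrackDisjoint (V W : List (Gam α)) : Prop :=
  ∀ i, V.filterMap (track i) = [] ∨ W.filterMap (track i) = []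

theorem TrackDisjoint.sameTracks_append_comm {V W : List (Gam α)} (h : TrackDisjoint V W)
    (U : List (Gam α)) : SameTracks (U ++ V ++ W) (U ++ W ++ V) := by
  intro i
  obtain h | h := h i <;> simp [h]

theorem trackDisjoint_append_right {U V W : List (Gam α)} :
    TrackDisjoint U (V ++ W) ↔ TrackDisjoint U V ∧ TrackDisjoint U W := by
  simp only [TrackDisjoint, List.filterMap_append, List.append_eq_nil_iff, or_and_left, forall_and]

theorem trackDisjoint_append_left {U V W : List (Gam α)} :
    TrackDisjoint (U ++ V) W ↔ TrackDisjoint U W ∧ TrackDisjoint V W := by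
  simp only [TrackDisjoint, List.filterMap_append, List.append_eq_nil_iff, and_or_right, forall_and]

theorem TrackDisjoint.wordPow_right {V W : List (Gam α)} (h : TrackDisjoint V W) (n : ℕ) :
    TrackDisjoint V (wordPow W n) := by
  refine fun i => (h i).imp_right fun h => ?_
  rw [filterMap_wordPow, h, wordPow, List.flatten_replicate_nil]

theorem trackDisjoint_map {i j : Fin 4} (hij : i ≠ j) (v w : List α) :
    TrackDisjoint (v.map (trackLetter i)) (w.map (trackLetter j)) := by
  intro k
  obtain rfl | hk := eq_or_ne k i
  · exact Or.inr (filterMap_track_map_of_ne hij w)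
  · exact Or.inl (filterMap_track_map_of_ne hk v)

end Tracks

section Reading

variable {α : Type*} {c : α → ℤ} {A : ℤ}

/-- `V` has weight in `[-A, A]` and can be reordered, up to trace equivalence, so that all its
prefixes have weight in `[-2 * A, 2 * A]`. -/
def Balanceable (c : α → ℤ) (A : ℤ) (V : List (Gam α)) : Prop :=
  |(V.map (flatWeight c)).sum| ≤ A ∧
    ∃ W, PrefixBounded (flatWeight c) (2 * A) W ∧ SameTracks W V

theorem Balanceable.congr {V W : List (Gam α)} (h : Balanceable c A V) (hVW : SameTracks V W) :
    Balanceable c A W := by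
  obtain ⟨hA, U, hU, hUV⟩ := h
  exact ⟨hVW.weight_eq c ▸ hA, U, hU, hUV.trans hVW⟩

theorem Balanceable.append {V X : List (Gam α)} (h : Balanceable c A V)
    (hX : PrefixBounded (flatWeight c) A X)
    (hVX : |(V.map (flatWeight c)).sum + (X.map (flatWeight c)).sum| ≤ A) :
    Balanceable c A (V ++ X) := by
  obtain ⟨hA, U, hU, hUV⟩ := h
  refine ⟨by rwa [List.map_append, List.sum_append], U ++ X, ?_, hUV.append_right X⟩
  refine prefixBounded_append_iff.2 ⟨hU, fun v hv => ?_⟩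
  rw [hUV.weight_eq c, two_mul]
  exact (abs_add_le _ _).trans (add_le_add hA (hX v hv))

theorem PrefixBounded.balanceable {W : List (Gam α)} (h : PrefixBounded (flatWeight c) A W) :
    Balanceable c A W := by
  refine ⟨h W List.prefix_rfl, W, fun v hv => (h v hv).trans ?_, fun _ => rfl⟩
  linarith [(abs_nonneg _).trans (h v hv)]

/-- Two words of positive and of negative weight, commuting up to trace equivalence. They serve to
keep the weight in `[-A, A]` while a third word is being read. -/
structure IsBalancingPair (c : α → ℤ) (A : ℤ) (X Z : List (Gam α)) : Prop where
  left_pos : 0 < (X.map (flatWeight c)).sum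
  right_neg : (Z.map (flatWeight c)).sum < 0
  left_prefixBounded : PrefixBounded (flatWeight c) A X
  right_prefixBounded : PrefixBounded (flatWeight c) A Z
  trackDisjoint : TrackDisjoint X Z

variable {W₀ X Y Z : List (Gam α)}

theorem Balanceable.pow_succ_left {p q : ℕ}
    (h : Balanceable c A (W₀ ++ wordPow X p ++ Y ++ wordPow Z q))
    (hXZ : IsBalancingPair c A X Z) (hXY : TrackDisjoint X Y)
    (hweight : ((W₀ ++ wordPow X p ++ Y ++ wordPow Z q).map (flatWeight c)).sum ≤ 0) :
    Balanceable c A (W₀ ++ wordPow X (p + 1) ++ Y ++ wordPow Z q) := by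
  have hcomm : TrackDisjoint X (Y ++ wordPow Z q) :=
    trackDisjoint_append_right.2 ⟨hXY, hXZ.trackDisjoint.wordPow_right q⟩
  have hV := abs_le.1 h.1
  have hX := abs_le.1 (hXZ.left_prefixBounded X List.prefix_rfl)
  have hpos := hXZ.left_pos
  refine (h.append hXZ.left_prefixBounded (abs_le.2 ⟨by omega, by omega⟩)).congr ?_
  simpa only [wordPow_succ, List.append_assoc] using
    (hcomm.sameTracks_append_comm (W₀ ++ wordPow X p)).symm

theorem Balanceable.pow_succ_right {p q : ℕ}
    (h : Balanceable c A (W₀ ++ wordPow X p ++ Y ++ wordPow Z q))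
    (hXZ : IsBalancingPair c A X Z)
    (hweight : 0 ≤ ((W₀ ++ wordPow X p ++ Y ++ wordPow Z q).map (flatWeight c)).sum) :
    Balanceable c A (W₀ ++ wordPow X p ++ Y ++ wordPow Z (q + 1)) := by
  have hV := abs_le.1 h.1
  have hZ := abs_le.1 (hXZ.right_prefixBounded Z List.prefix_rfl)
  have hneg := hXZ.right_neg
  simpa only [wordPow_succ, List.append_assoc] using
    h.append hXZ.right_prefixBounded (abs_le.2 ⟨by omega, by omega⟩)

theorem Balanceable.concat_middle {p q : ℕ} {g : Gam α}
    (h : Balanceable c A (W₀ ++ wordPow X p ++ Y ++ wordPow Z q))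
    (hg : |flatWeight c g| ≤ A) (hgZ : TrackDisjoint [g] Z)
    (hweight : |((W₀ ++ wordPow X p ++ Y ++ wordPow Z q).map (flatWeight c)).sum +
      flatWeight c g| ≤ A) :
    Balanceable c A (W₀ ++ wordPow X p ++ (Y ++ [g]) ++ wordPow Z q) := by
  refine (h.append (prefixBounded_singleton hg) (by simpa using hweight)).congr ?_
  simpa only [List.append_assoc] using
    ((hgZ.wordPow_right q).sameTracks_append_comm (W₀ ++ wordPow X p ++ Y)).symm

theorem sum_map_pow_succ_left (f : Gam α → ℤ) (p q : ℕ) :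
    ((W₀ ++ wordPow X (p + 1) ++ Y ++ wordPow Z q).map f).sum =
      ((W₀ ++ wordPow X p ++ Y ++ wordPow Z q).map f).sum + (X.map f).sum := by
  simp only [wordPow_succ, List.map_append, List.sum_append]
  ring

theorem sum_map_pow_succ_right (f : Gam α → ℤ) (p q : ℕ) :
    ((W₀ ++ wordPow X p ++ Y ++ wordPow Z (q + 1)).map f).sum =
      ((W₀ ++ wordPow X p ++ Y ++ wordPow Z q).map f).sum + (Z.map f).sum := by
  simp only [wordPow_succ, List.map_append, List.sum_append]
  ring

theorem Balanceable.exists_abs_sum_add_le {p q : ℕ}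
    (h : Balanceable c A (W₀ ++ wordPow X p ++ Y ++ wordPow Z q))
    (hXZ : IsBalancingPair c A X Z) (hXY : TrackDisjoint X Y) {k : ℤ} (hk : |k| ≤ 1) :
    ∃ p q, Balanceable c A (W₀ ++ wordPow X p ++ Y ++ wordPow Z q) ∧
      |((W₀ ++ wordPow X p ++ Y ++ wordPow Z q).map (flatWeight c)).sum + k| ≤ A := by
  have hk := abs_le.1 hk
  have hV := abs_le.1 h.1
  have hX := abs_le.1 (hXZ.left_prefixBounded X List.prefix_rfl)
  have hZ := abs_le.1 (hXZ.right_prefixBounded Z List.prefix_rfl)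
  have hpos := hXZ.left_pos
  have hneg := hXZ.right_neg
  obtain hle | hlt := le_or_gt ((W₀ ++ wordPow X p ++ Y ++ wordPow Z q).map (flatWeight c)).sum 0
  · obtain hk₀ | hk₀ := le_or_gt 0 k
    · exact ⟨p, q, h, abs_le.2 ⟨by omega, by omega⟩⟩
    · refine ⟨p + 1, q, h.pow_succ_left hXZ hXY hle, ?_⟩
      rw [sum_map_pow_succ_left]
      exact abs_le.2 ⟨by omega, by omega⟩
  · obtain hk₀ | hk₀ := le_or_gt k 0
    · exact ⟨p, q, h, abs_le.2 ⟨by omega, by omega⟩⟩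
    · refine ⟨p, q + 1, h.pow_succ_right hXZ hlt.le, ?_⟩
      rw [sum_map_pow_succ_right]
      exact abs_le.2 ⟨by omega, by omega⟩

theorem IsBalancingPair.exists_pow_balanceable (hXZ : IsBalancingPair c A X Z)
    (h₀ : PrefixBounded (flatWeight c) A W₀) (hXY : TrackDisjoint X Y) (hYZ : TrackDisjoint Y Z)
    (hY : ∀ g ∈ Y, |flatWeight c g| ≤ 1) :
    ∃ p q, Balanceable c A (W₀ ++ wordPow X p ++ Y ++ wordPow Z q) := by
  have hA : 1 ≤ A :=
    hXZ.left_pos.trans_le ((le_abs_self _).trans (hXZ.left_prefixBounded X List.prefix_rfl))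
  induction Y using List.reverseRecOn with
  | nil => exact ⟨0, 0, by simpa [wordPow_zero] using h₀.balanceable⟩
  | append_singleton Y g ih =>
    rw [trackDisjoint_append_right] at hXY
    rw [trackDisjoint_append_left] at hYZ
    simp only [List.forall_mem_append, List.forall_mem_singleton] at hY
    obtain ⟨p, q, h⟩ := ih hXY.1 hYZ.1 hY.1
    obtain ⟨p, q, h, hweight⟩ := h.exists_abs_sum_add_le hXZ hXY.1 hY.2
    exact ⟨p, q, h.concat_middle (hY.2.trans hA) hYZ.2 hweight⟩

theorem Balanceable.of_le_of_sum_eq_zero {p q n m : ℕ}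
    (h : Balanceable c A (W₀ ++ wordPow X p ++ Y ++ wordPow Z q))
    (hXZ : IsBalancingPair c A X Z) (hXY : TrackDisjoint X Y) (hpn : p ≤ n) (hqm : q ≤ m)
    (hsum : ((W₀ ++ wordPow X n ++ Y ++ wordPow Z m).map (flatWeight c)).sum = 0) :
    Balanceable c A (W₀ ++ wordPow X n ++ Y ++ wordPow Z m) := by
  have hpos := hXZ.left_pos
  have hneg := hXZ.right_neg
  have hweight (p q : ℕ) : ((W₀ ++ wordPow X p ++ Y ++ wordPow Z q).map (flatWeight c)).sum =
      (W₀.map (flatWeight c)).sum + p * (X.map (flatWeight c)).sum +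
        (Y.map (flatWeight c)).sum + q * (Z.map (flatWeight c)).sum := by
    simp only [List.map_append, List.sum_append, sum_map_wordPow]
  induction hr : (n - p) + (m - q) generalizing p q with
  | zero =>
    obtain rfl : p = n := by omega
    obtain rfl : q = m := by omega
    exact h
  | succ r ih =>
    obtain hle | hgt := le_or_gt ((W₀ ++ wordPow X p ++ Y ++ wordPow Z q).map (flatWeight c)).sum 0
    · have hlt : p < n := by
        refine lt_of_le_of_ne hpn ?_
        rintro rfl
        have hqm' : (q : ℤ) < m := by omega
        rw [hweight] at hle hsum
        linarith [mul_lt_mul_of_neg_right hqm' hneg]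
      exact ih (h.pow_succ_left hXZ hXY hle) hlt hqm (by omega)
    · have hlt : q < m := by
        refine lt_of_le_of_ne hqm ?_
        rintro rfl
        rw [hweight] at hgt hsum
        linarith [mul_le_mul_of_nonneg_right (Nat.cast_le.2 hpn : (p : ℤ) ≤ n) hpos.le]
      exact ih (h.pow_succ_right hXZ hgt.le) hpn hlt (by omega)

theorem IsBalancingPair.exists_forall_balanceable (hXZ : IsBalancingPair c A X Z)
    (h₀ : PrefixBounded (flatWeight c) A W₀) (hXY : TrackDisjoint X Y) (hYZ : TrackDisjoint Y Z)
    (hY : ∀ g ∈ Y, |flatWeight c g| ≤ 1) :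
    ∃ n₀, ∀ n m, n₀ ≤ n → n₀ ≤ m →
      ((W₀ ++ wordPow X n ++ Y ++ wordPow Z m).map (flatWeight c)).sum = 0 →
        Balanceable c A (W₀ ++ wordPow X n ++ Y ++ wordPow Z m) := by
  obtain ⟨p, q, h⟩ := hXZ.exists_pow_balanceable h₀ hXY hYZ hY
  exact ⟨max p q, fun n m hn hm =>
    h.of_le_of_sum_eq_zero hXZ hXY ((le_max_left p q).trans hn) ((le_max_right p q).trans hm)⟩

theorem flat_pumped (w₁ x w₂ z w₃ : List α) (n m : ℕ) :
    flat (w₁.map (trackLetter 0) ++ wordPow (x.map (trackLetter 0)) n ++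
      (w₂.map (trackLetter 1) ++ w₃.map (trackLetter 3)) ++ wordPow (z.map (trackLetter 2)) m) =
        w₁ ++ wordPow x n ++ w₂ ++ wordPow z m ++ w₃ := by
  simp [flat_eq_append_track, ← map_wordPow, filterMap_track_map_self, filterMap_track_map_of_ne,
    -List.filterMap_map]

/-- The five blocks are read on the tracks `0`, `0`, `1`, `2` and `3`: the pumped words `x` and `z`
lie on different tracks, so their copies can be interleaved freely. -/
theorem exists_mem_balancedLang_flat_eq (hc : ∀ σ, |c σ| ≤ 1) {w₁ x z : List α} (w₂ w₃ : List α)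
    (hw₁ : PrefixBounded c A w₁) (hx : PrefixBounded c A x) (hz : PrefixBounded c A z)
    (hxpos : 0 < (x.map c).sum) (hzneg : (z.map c).sum < 0) :
    ∃ n₀, ∀ n m, n₀ ≤ n → n₀ ≤ m →
      ((w₁ ++ wordPow x n ++ w₂ ++ wordPow z m ++ w₃).map c).sum = 0 →
        ∃ W ∈ balancedLang (flatWeight c) (2 * A),
          flat W = w₁ ++ wordPow x n ++ w₂ ++ wordPow z m ++ w₃ := by
  have hXZ : IsBalancingPair c A (x.map (trackLetter 0)) (z.map (trackLetter 2)) := {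
    left_pos := by simpa [flatWeight_comp_trackLetter]
    right_neg := by simpa [flatWeight_comp_trackLetter]
    left_prefixBounded := by rwa [prefixBounded_map_iff, flatWeight_comp_trackLetter]
    right_prefixBounded := by rwa [prefixBounded_map_iff, flatWeight_comp_trackLetter]
    trackDisjoint := trackDisjoint_map (by decide) x z }
  have h₀ : PrefixBounded (flatWeight c) A (w₁.map (trackLetter 0)) := by
    rwa [prefixBounded_map_iff, flatWeight_comp_trackLetter]
  obtain ⟨n₀, hn₀⟩ := hXZ.exists_forall_balanceable h₀
    (Y := w₂.map (trackLetter 1) ++ w₃.map (trackLetter 3))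
    (trackDisjoint_append_right.2
      ⟨trackDisjoint_map (by decide) x w₂, trackDisjoint_map (by decide) x w₃⟩)
    (trackDisjoint_append_left.2
      ⟨trackDisjoint_map (by decide) w₂ z, trackDisjoint_map (by decide) w₃ z⟩) (by
      have hletter (i : Fin 4) (a : α) : |flatWeight c (trackLetter i a)| ≤ 1 :=
         (congrArg abs (congrFun (flatWeight_comp_trackLetter c i) a)).trans_le (hc a)
      simp [hletter, or_imp, forall_and])
  refine ⟨n₀, fun n m hn hm hsum => ?_⟩
  rw [← flat_pumped, sum_map_flat] at hsum
  obtain ⟨-, W, hW, htracks⟩ := hn₀ n m hn hm hsum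
  exact ⟨W, ⟨htracks.weight_eq c ▸ hsum, hW⟩, htracks.flat_eq.trans (flat_pumped ..)⟩

end Reading

section Vanishing

open Filter

variable {α K n : Type*} [Field K] [Fintype n] [DecidableEq n] {c : α → ℤ}

theorem eval_prod_map_eq_zero_of_isPumpable {A : ℤ} {Φ : α → Matrix n n K}
    {p : MvPolynomial (n × n) K} (hc : ∀ σ, |c σ| ≤ 1)
    (hp : ∀ W ∈ balancedLang (flatWeight c) (2 * A),
      p.eval (fun ij => ((flat W).map Φ).prod ij.1 ij.2) = 0)
    {w₁ x w₂ z w₃ : List α} (hw₁ : PrefixBounded c A w₁) (hx : PrefixBounded c A x)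
    (hz : PrefixBounded c A z) (hxpos : 0 < (x.map c).sum) (hzneg : (z.map c).sum < 0)
    (hxΦ : IsPumpable (x.map Φ).prod) (hzΦ : IsPumpable (z.map Φ).prod)
    (hsum : ((w₁ ++ x ++ w₂ ++ z ++ w₃).map c).sum = 0) :
    p.eval (fun ij => ((w₁ ++ x ++ w₂ ++ z ++ w₃).map Φ).prod ij.1 ij.2) = 0 := by
  obtain ⟨U, hU⟩ := hxΦ.exists_pow_succ_eq
  obtain ⟨V, hV⟩ := hzΦ.exists_pow_succ_eq
  obtain ⟨a, ha⟩ := Int.eq_ofNat_of_zero_le hxpos.le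
  obtain ⟨b, hb⟩ := Int.eq_ofNat_of_zero_le (neg_nonneg.2 hzneg.le)
  have hsum_pump (k : ℕ) :
      ((w₁ ++ wordPow x (b * k + 1) ++ w₂ ++ wordPow z (a * k + 1) ++ w₃).map c).sum = 0 := by
    simp only [List.map_append, List.sum_append, sum_map_wordPow, ha, neg_eq_iff_eq_neg.1 hb]
      at hsum ⊢
    push_cast
    linear_combination hsum
  have hprod_pump (k : ℕ) :
      ((w₁ ++ wordPow x (b * k + 1) ++ w₂ ++ wordPow z (a * k + 1) ++ w₃).map Φ).prod =
        (w₁.map Φ).prod * (x.map Φ).prod * ↑(U ^ b) ^ k * ((w₂.map Φ).prod * (z.map Φ).prod) *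
          ↑(V ^ a) ^ k * (w₃.map Φ).prod := by
    simp only [List.map_append, List.prod_append, prod_map_wordPow, hU, hV,
      Units.val_pow_eq_pow_val, pow_mul, mul_assoc]
  obtain ⟨n₀, hn₀⟩ := exists_mem_balancedLang_flat_eq hc w₂ w₃ hw₁ hx hz hxpos hzneg
  have hk : ∀ᶠ k : ℕ in atTop, p.eval (fun ij => ((w₁.map Φ).prod * (x.map Φ).prod * ↑(U ^ b) ^ k *
      ((w₂.map Φ).prod * (z.map Φ).prod) * ↑(V ^ a) ^ k * (w₃.map Φ).prod) ij.1 ij.2) = 0 := by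
    filter_upwards [eventually_ge_atTop n₀] with k hk
    obtain ⟨W, hW, hflat⟩ := hn₀ (b * k + 1) (a * k + 1) (by nlinarith) (by nlinarith) (hsum_pump k)
    rw [← hprod_pump, ← hflat]
    exact hp W hW
  simpa only [List.map_append, List.prod_append, mul_assoc] using
    eval_eq_zero_of_eventually_pow (U ^ b) (V ^ a) _ _ _ p hk

theorem exists_prefixBounded_weight_eq (hc : ∀ σ, |c σ| ≤ 1) (N : ℕ) {w : List α}
    (hw : ¬ PrefixBounded c N w) :
    ∃ u v, w = u ++ v ∧ PrefixBounded c N u ∧ |(u.map c).sum| = N := by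
  obtain hlt | ⟨u, ⟨v, rfl⟩, huN, hu⟩ := forall_prefix_lt_or_exists_first_passage
    (f := fun v => |(v.map c).sum|) (N := N) (by simp) (fun v σ => by
      simpa using (abs_add_le _ _).trans (add_le_add_right (hc σ) _)) w
  · exact absurd (fun v hv => (hlt v hv).le) hw
  · exact ⟨u, v, rfl, hu, huN⟩

theorem eval_prod_map_eq_zero_of_weight_eq {N : ℕ}
    (hN : ∀ l : List (Matrix n n K), N ≤ l.length →
      ∃ l₁ l₂ l₃, l = l₁ ++ l₂ ++ l₃ ∧ l₂ ≠ [] ∧ IsPumpable l₂.prod)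
    {Φ : α → Matrix n n K} {p : MvPolynomial (n × n) K} (hc : ∀ σ, |c σ| ≤ 1)
    (hp : ∀ W ∈ balancedLang (flatWeight c) (2 * N),
      p.eval (fun ij => ((flat W).map Φ).prod ij.1 ij.2) = 0)
    {u v : List α} (hu : PrefixBounded c N u) (huN : (u.map c).sum = N)
    (hsum : ((u ++ v).map c).sum = 0) :
    p.eval (fun ij => ((u ++ v).map Φ).prod ij.1 ij.2) = 0 := by
  have hvN : (v.map (-c)).sum = N := by
    rw [List.map_append, List.sum_append] at hsum
    rw [sum_map_neg_weight]
    omega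
  obtain ⟨a, x, b, rfl, hxpos, hx, hxΦ⟩ :=
    exists_pumpable_subword hN Φ (fun σ => (abs_le.1 (hc σ)).2) huN.ge
  obtain ⟨a', z, b', rfl, hzpos, hz, hzΦ⟩ :=
    exists_pumpable_subword (c := -c) hN Φ (fun σ => neg_le.1 (abs_le.1 (hc σ)).1) hvN.ge
  rw [sum_map_neg_weight, neg_pos] at hzpos
  have hword : a ++ x ++ b ++ (a' ++ z ++ b') = a ++ x ++ (b ++ a') ++ z ++ b' := by
    simp only [List.append_assoc]
  rw [hword] at hsum ⊢
  exact eval_prod_map_eq_zero_of_isPumpable hc hp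
    (prefixBounded_append_iff.1 (prefixBounded_append_iff.1 hu).1).1 hx
    (prefixBounded_neg_iff.1 hz) hxpos hzpos hxΦ hzΦ hsum

theorem exists_forall_eval_eq_zero_of_balancedLang (K n : Type*) [Field K] [Fintype n]
    [DecidableEq n] (hc : ∀ σ, |c σ| ≤ 1) :
    ∃ N : ℕ, ∀ (Φ : α → Matrix n n K) (p : MvPolynomial (n × n) K),
      (∀ W ∈ balancedLang (flatWeight c) (2 * N),
        p.eval (fun ij => ((flat W).map Φ).prod ij.1 ij.2) = 0) →
      ∀ w : List α, (w.map c).sum = 0 → p.eval (fun ij => (w.map Φ).prod ij.1 ij.2) = 0 := by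
  obtain ⟨N, hN⟩ := exists_isPumpable_infix K n
  refine ⟨N, fun Φ p hp w hw => ?_⟩
  by_cases hwN : PrefixBounded c N w
  · rw [← flat_map_trackLetter 0 w]
    refine hp _ ⟨by rwa [List.map_map, flatWeight_comp_trackLetter], ?_⟩
    rw [prefixBounded_map_iff, flatWeight_comp_trackLetter]
    exact fun v hv => (hwN v hv).trans (by omega)
  · obtain ⟨u, v, rfl, hu, huN⟩ := exists_prefixBounded_weight_eq hc N hwN
    obtain huN | huN := (abs_eq (by omega)).1 huN
    · exact eval_prod_map_eq_zero_of_weight_eq hN hc hp hu huN hw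
    · refine eval_prod_map_eq_zero_of_weight_eq (c := -c) hN (by simpa using hc) ?_
        (prefixBounded_neg_iff.2 hu) (by rw [sum_map_neg_weight, huN, neg_neg])
        (by rw [sum_map_neg_weight, hw, neg_zero])
      rwa [flatWeight_neg, balancedLang_neg]

end Vanishing

section Closure

theorem liftMat_one {d : ℕ} : liftMat (1 : Matrix (Fin d) (Fin d) ℚ) = 1 :=
  map_one (algebraMap ℚ Qbar).mapMatrix

theorem liftMat_mul {d : ℕ} (M M' : Matrix (Fin d) (Fin d) ℚ) :
    liftMat (M * M') = liftMat M * liftMat M' :=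
  map_mul (algebraMap ℚ Qbar).mapMatrix M M'

theorem matZClosure_mono {d : ℕ} {S T : Set (Matrix (Fin d) (Fin d) Qbar)} (h : S ⊆ T) :
    matZClosure d S ⊆ matZClosure d T :=
  fun _ hA p hp => hA p fun B hB => hp B (h hB)

theorem matZClosure_subset_matZClosure {d : ℕ} {S T : Set (Matrix (Fin d) (Fin d) Qbar)}
    (h : S ⊆ matZClosure d T) : matZClosure d S ⊆ matZClosure d T :=
  fun _ hA p hp => hA p fun _ hB => h hB p hp

@[to_additive]
theorem word_hom_eq_prod {α M : Type*} [Monoid M] {Φ : List α → M} (hnil : Φ [] = 1)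
    (happ : ∀ u v, Φ (u ++ v) = Φ u * Φ v) (w : List α) :
    Φ w = (w.map fun σ => Φ [σ]).prod := by
  induction w with
  | nil => exact hnil
  | cons σ w ih => rw [List.map_cons, List.prod_cons, ← ih, ← happ, List.singleton_append]

end Closure

theorem zero_closure_via_flat_general {α : Type*} (d : ℕ) (ω : List α → ℤ)
    (hω_nil : ω [] = 0) (hω_app : ∀ u v : List α, ω (u ++ v) = ω u + ω v)
    (hω_letter : ∀ σ : α, |ω [σ]| ≤ 1) :
    ∃ K : Set (List (Gam α)), Language.IsRegular (K : Language (Gam α)) ∧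
      flat '' K ⊆ zeroLang ω ∧
      ∀ Φ : List α → Matrix (Fin d) (Fin d) Qbar, Φ [] = 1 → (∀ u v, Φ (u ++ v) = Φ u * Φ v) →
        matZClosure d (Φ '' zeroLang ω) = matZClosure d (Φ '' (flat '' K)) := by
  have hω := word_hom_eq_sum hω_nil hω_app
  obtain ⟨N, hN⟩ := exists_forall_eval_eq_zero_of_balancedLang Qbar (Fin d) hω_letter
  have hsub : flat '' balancedLang (flatWeight fun σ => ω [σ]) (2 * N) ⊆ zeroLang ω := by
    rintro _ ⟨W, hW, rfl⟩
    exact (hω _).trans ((sum_map_flat _ W).trans hW.1)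
  refine ⟨_, balancedLang_isRegular _ (2 * N), hsub, fun Φ hΦ_nil hΦ_app => ?_⟩
  have hΦ := word_hom_eq_prod hΦ_nil hΦ_app
  refine (matZClosure_subset_matZClosure ?_).antisymm (matZClosure_mono (Set.image_mono hsub))
  rintro _ ⟨w, hw, rfl⟩ p hp
  rw [hΦ]
  refine hN _ p (fun W hW => ?_) w ((hω w).symm.trans hw)
  simpa only [hΦ (flat W)] using hp _ ⟨_, ⟨W, hW, rfl⟩, rfl⟩

/-- There is a regular language `K ⊆ Γ*` with `flat(K) ⊆ L_Z(ω)` such that the Zariski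
closure of `φ(L_Z(ω))` equals the Zariski closure of `φ(L_BZ(ω) ∪ flat(K))`. -/
theorem zero_closure_via_flat {α : Type*} [Fintype α] (d : ℕ)
    (φ : List α → Matrix (Fin d) (Fin d) ℚ)
    (hφ_nil : φ [] = 1) (hφ_app : ∀ u v : List α, φ (u ++ v) = φ u * φ v)
    (ω : List α → ℤ)
    (hω_nil : ω [] = 0) (hω_app : ∀ u v : List α, ω (u ++ v) = ω u + ω v)
    (hω_letter : ∀ σ : α, ω [σ] = -1 ∨ ω [σ] = 0 ∨ ω [σ] = 1) :
    ∃ K : Set (List (Gam α)), Language.IsRegular (K : Language (Gam α)) ∧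
      flat '' K ⊆ zeroLang ω ∧
      matZClosure d ((fun w => liftMat (φ w)) '' zeroLang ω) =
        matZClosure d ((fun w => liftMat (φ w)) '' (boundedZeroLang d ω ∪ flat '' K)) := by
  obtain ⟨K, hK, hsub, hclosure⟩ := zero_closure_via_flat_general d ω hω_nil hω_app fun σ =>
    by rcases hω_letter σ with h | h | h <;> simp [h]
  refine ⟨K, hK, hsub, Set.Subset.antisymm ?_ (matZClosure_mono (Set.image_mono ?_))⟩
  · rw [hclosure (fun w => liftMat (φ w)) (by simp only [hφ_nil, liftMat_one])
      (by simp only [hφ_app, liftMat_mul, implies_true])]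
    exact matZClosure_mono (Set.image_mono Set.subset_union_right)
  · exact Set.union_subset (fun w hw => hw.1) hsub

end
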